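/- arXiv:2509.02501 — 2 statements merged into one kernel-verified Lean document; each statement's English description precedes it below -/
import Mathlib

section
/- Let n ≥ 1 be an integer and let ρ be an irreducible finite-dimensional complex representation of SL(2, ℤ/nℤ). If ρ(t) has a unique eigenvalue, then ρ is one-dimensional. -/
/-- The group `SL(2, ℤ/nℤ)`. -/
abbrev SL2 (n : ℕ) := Matrix.SpecialLinearGroup (Fin 2) (ZMod n)

/-- The element `t = [[1,1],[0,1]]` of `SL(2, ℤ/nℤ)`. -/
def tGen (n : ℕ) : SL2 n := ⟨!![1, 1; 0, 1], by simp [Matrix.det_fin_two_of]⟩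

/-- A representation is irreducible if the space is nonzero and the only invariant
subspaces are `⊥` and `⊤`. -/
def IsIrreducibleRep {G V : Type} [Group G] [AddCommGroup V] [Module ℂ V]
    (ρ : Representation ℂ G V) : Prop :=
  Nontrivial V ∧ ∀ p : Submodule ℂ V, (∀ g : G, p.map (ρ g) ≤ p) → p = ⊥ ∨ p = ⊤

/-!
Since `t` has finite order, `ρ t` is diagonalizable, so a unique eigenvalue forces it to be a
scalar. The elements acting by scalars form a normal subgroup, and the normal closure of `t` is the
whole group: a conjugate of `t` generates the lower unitriangular matrices, and Euclidean division
on the first column writes every matrix as a product of unitriangular ones. Hence every subspace is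
invariant, and irreducibility leaves only dimension one.
-/

open Polynomial
open Matrix.SpecialLinearGroup
  (transvection transvection_add transvection_coe transvection_inv)

section Generation

variable {R : Type*} [CommRing R]

theorem coe_transvection_zero_one (x : R) :
    (transvection (zero_ne_one (α := Fin 2)) x : Matrix (Fin 2) (Fin 2) R) = !![1, x; 0, 1] := by
  ext i j
  fin_cases i <;> fin_cases j <;> simp [transvection_coe]

theorem coe_transvection_one_zero (x : R) :
    (transvection (one_ne_zero (α := Fin 2)) x : Matrix (Fin 2) (Fin 2) R) = !![1, 0; x, 1] := by
  ext i j
  fin_cases i <;> fin_cases j <;> simp [transvection_coe]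

theorem eq_transvection_mul_transvection_mul_transvection (g : Matrix.SpecialLinearGroup (Fin 2) R)
    {u : R} (hu : g 1 0 * u = 1) :
    g = transvection zero_ne_one ((g 0 0 - 1) * u) * transvection one_ne_zero (g 1 0) *
      transvection zero_ne_one ((g 1 1 - 1) * u) := by
  have hdet : g 0 0 * g 1 1 - g 0 1 * g 1 0 = 1 := g.1.det_fin_two ▸ g.det_coe
  refine Subtype.ext ?_
  conv_lhs => rw [g.1.eta_fin_two]
  simp only [Matrix.SpecialLinearGroup.coe_mul, coe_transvection_zero_one,
    coe_transvection_one_zero, Matrix.mul_fin_two, EmbeddingLike.apply_eq_iff_eq,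
    Matrix.vecCons_inj, and_true]
  refine ⟨⟨?_, ?_⟩, ?_, ?_⟩
  · linear_combination (1 - g 0 0) * hu
  · linear_combination (-(g 0 0 - 1) * (g 1 1 - 1) * u - g 0 1) * hu - u * hdet
  · ring
  · linear_combination (1 - g 1 1) * hu

theorem mem_of_isUnit_lowerLeft {H : Subgroup (Matrix.SpecialLinearGroup (Fin 2) R)}
    (hH : ∀ {i j : Fin 2} (hij : i ≠ j) (x : R), transvection hij x ∈ H)
    {g : Matrix.SpecialLinearGroup (Fin 2) R} (hg : IsUnit (g 1 0)) : g ∈ H := by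
  obtain ⟨u, hu⟩ := hg.exists_right_inv
  rw [eq_transvection_mul_transvection_mul_transvection g hu]
  exact H.mul_mem (H.mul_mem (hH _ _) (hH _ _)) (hH _ _)

/-- The Weyl element `[[0,-1],[1,0]]`, which swaps the two rows up to sign and conjugates upper
unitriangular matrices to lower ones. -/
def weylElement (R : Type*) [CommRing R] : Matrix.SpecialLinearGroup (Fin 2) R :=
  ⟨!![0, -1; 1, 0], by simp [Matrix.det_fin_two_of]⟩

@[simp]
theorem coe_weylElement : (weylElement R : Matrix (Fin 2) (Fin 2) R) = !![0, -1; 1, 0] := rfl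

theorem weylElement_mul_one_zero (g : Matrix.SpecialLinearGroup (Fin 2) R) :
    (weylElement R * g) 1 0 = g 0 0 := by
  simp [Matrix.mul_apply]

theorem weylElement_conj_transvection (x : R) :
    weylElement R * transvection zero_ne_one x * (weylElement R)⁻¹ =
      transvection one_ne_zero (-x) := by
  rw [mul_inv_eq_iff_eq_mul]
  refine Subtype.ext ?_
  simp [coe_transvection_zero_one, coe_transvection_one_zero]

theorem eq_top_of_transvection_mem {E : Type*} [EuclideanDomain E] {φ : E →+* R}
    (hφ : Function.Surjective φ) {H : Subgroup (Matrix.SpecialLinearGroup (Fin 2) R)}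
    (hH : ∀ {i j : Fin 2} (hij : i ≠ j) (x : R), transvection hij x ∈ H) : H = ⊤ := by
  have hw : weylElement R ∈ H := mem_of_isUnit_lowerLeft hH (by simp)
  suffices ∀ (c : E) (g : Matrix.SpecialLinearGroup (Fin 2) R), φ c = g 1 0 → g ∈ H from
    H.eq_top_iff'.mpr fun g ↦ (hφ (g 1 0)).elim fun c hc ↦ this c g hc
  intro c
  induction c using (EuclideanDomain.r_wellFounded (R := E)).induction with | _ c ih
  intro g hc
  obtain ⟨a, ha⟩ := hφ (g 0 0)
  by_cases hc0 : c = 0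
  · have hunit : IsUnit (g 0 0) := by
      have hdet := g.det_coe
      rw [Matrix.det_fin_two, ← hc, hc0, map_zero, mul_zero, sub_zero] at hdet
      exact .of_mul_eq_one _ hdet
    refine (H.mul_mem_cancel_left hw).mp (mem_of_isUnit_lowerLeft hH ?_)
    rwa [weylElement_mul_one_zero]
  · set s := transvection (zero_ne_one (α := Fin 2)) (-φ (a / c))
    have hmod : φ (a % c) = (weylElement R * (s * g)) 1 0 := by
      have hrow : (s * g) 0 0 = g 0 0 + -φ (a / c) * g 1 0 :=
        Matrix.transvection_mul_apply_same 0 1 0 _ g.1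
      rw [weylElement_mul_one_zero, hrow, ← ha, ← hc, EuclideanDomain.mod_eq_sub_mul_div, map_sub,
        map_mul]
      ring
    have hmem := ih (a % c) (EuclideanDomain.mod_lt a hc0) _ hmod
    rwa [H.mul_mem_cancel_left hw, H.mul_mem_cancel_left (hH _ _)] at hmem

end Generation

section ModularGroup

variable (n : ℕ)

theorem tGen_eq_transvection : tGen n = transvection zero_ne_one 1 :=
  Subtype.ext (coe_transvection_zero_one 1).symm

theorem tGen_zpow (k : ℤ) : tGen n ^ k = transvection zero_ne_one (k : ZMod n) := by
  induction k with
  | zero => simp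
  | succ k ih =>
    rw [zpow_add_one, ih, tGen_eq_transvection, ← transvection_add, Int.cast_add, Int.cast_one]
  | pred k ih =>
    rw [zpow_sub_one, ih, tGen_eq_transvection, transvection_inv, ← transvection_add,
      Int.cast_sub, Int.cast_one, sub_eq_add_neg]

theorem tGen_pow_self : tGen n ^ n = 1 := by
  simpa using tGen_zpow n n

theorem normalClosure_tGen : Subgroup.normalClosure {tGen n} = ⊤ := by
  have hupper (x : ZMod n) :
      transvection zero_ne_one x ∈ Subgroup.normalClosure {tGen n} := by
    obtain ⟨k, rfl⟩ := ZMod.intCast_surjective x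
    rw [← tGen_zpow]
    exact zpow_mem (Subgroup.subset_normalClosure (Set.mem_singleton _)) k
  have hlower (x : ZMod n) :
      transvection one_ne_zero x ∈ Subgroup.normalClosure {tGen n} := by
    rw [← neg_neg x, ← weylElement_conj_transvection]
    exact Subgroup.normalClosure_normal.conj_mem _ (hupper (-x)) _
  refine eq_top_of_transvection_mem (φ := Int.castRingHom (ZMod n)) ZMod.intCast_surjective ?_
  intro i j hij x
  fin_cases i <;> fin_cases j
  · exact absurd rfl hij
  · exact hupper x
  · exact hlower x
  · exact absurd rfl hij

end ModularGroup

section Spectrum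

variable {K A : Type*} [Field K] [Ring A] [Algebra K A]

theorem exists_mem_spectrum_eval_eq_zero {a : A} {p : K[X]} (hsplits : p.Splits) (hp : p ≠ 0)
    (ha : ¬IsUnit (aeval a p)) : ∃ k ∈ spectrum K a, p.eval k = 0 := by
  refine spectrum.exists_mem_of_not_isUnit_aeval_prod fun hroots ↦ ha ?_
  have hlead : IsUnit (algebraMap K A p.leadingCoeff) :=
    (isUnit_iff_ne_zero.mpr (leadingCoeff_ne_zero.mpr hp)).map (algebraMap K A)
  rw [hsplits.eq_prod_roots, map_mul, aeval_C]
  exact hlead.mul hroots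

theorem exists_eq_algebraMap_of_splits_of_separable {a : A} {p : K[X]} (hsplits : p.Splits)
    (hsep : p.Separable) (ha : aeval a p = 0) (hspec : (spectrum K a).Subsingleton) :
    ∃ c : K, a = algebraMap K A c := by
  cases subsingleton_or_nontrivial A
  · exact ⟨0, Subsingleton.elim _ _⟩
  obtain ⟨c, hc, hpc⟩ :=
    exists_mem_spectrum_eval_eq_zero hsplits hsep.ne_zero (ha ▸ not_isUnit_zero)
  obtain ⟨q, rfl⟩ := dvd_iff_isRoot.mpr hpc
  have hqc : q.eval c ≠ 0 := by
    simpa [isCoprime_zero_left] using hsep.isCoprime.map (evalRingHom c)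
  have hqa : IsUnit (aeval a q) := by
    by_contra hqa
    obtain ⟨k, hk, hqk⟩ := exists_mem_spectrum_eval_eq_zero
      (hsplits.of_dvd hsep.ne_zero (dvd_mul_left _ _)) (right_ne_zero_of_mul hsep.ne_zero) hqa
    exact hqc (hspec hk hc ▸ hqk)
  refine ⟨c, sub_eq_zero.mp (hqa.mul_left_eq_zero.mp ?_)⟩
  simpa using ha

theorem exists_eq_algebraMap_of_pow_eq_one {n : ℕ} [NeZero n] [HasEnoughRootsOfUnity K n] {a : A}
    (ha : a ^ n = 1) (hspec : (spectrum K a).Subsingleton) : ∃ c : K, a = algebraMap K A c := by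
  obtain ⟨ζ, hζ⟩ := HasEnoughRootsOfUnity.exists_primitiveRoot K n
  have hn : (n : K) ≠ 0 := hζ.neZero'.ne
  exact exists_eq_algebraMap_of_splits_of_separable (X_pow_sub_one_splits hζ)
    (separable_X_pow_sub_C 1 hn one_ne_zero) (by simp [ha]) hspec

end Spectrum

section Scalars

variable {K G V : Type*} [Field K] [Group G] [AddCommGroup V] [Module K V]

/-- The subgroup of elements acting by scalars, i.e. the kernel of the projectivization of `ρ`. -/
def scalarSubgroup (ρ : Representation K G V) : Subgroup G :=
  (Units.map (algebraMap K (Module.End K V)).toMonoidHom).range.comap ρ.asGroupHom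

theorem mem_scalarSubgroup_iff {ρ : Representation K G V} {g : G} :
    g ∈ scalarSubgroup ρ ↔ ∃ c : K, ρ g = algebraMap K (Module.End K V) c := by
  constructor
  · rintro ⟨c, hc⟩
    exact ⟨c, (congrArg Units.val hc).symm⟩
  · rintro ⟨c, hc⟩
    have hunit : IsUnit (algebraMap K (Module.End K V) c) := hc ▸ (ρ.asGroupHom g).isUnit
    cases subsingleton_or_nontrivial (Module.End K V)
    · exact ⟨1, Subsingleton.elim _ _⟩
    · exact ⟨Units.mk0 c fun h ↦ by simp [h] at hunit, Units.ext hc.symm⟩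

instance scalarSubgroup_normal (ρ : Representation K G V) : (scalarSubgroup ρ).Normal where
  conj_mem g hg h := by
    obtain ⟨c, hc⟩ := mem_scalarSubgroup_iff.mp hg
    refine mem_scalarSubgroup_iff.mpr ⟨c, ?_⟩
    rw [map_mul, map_mul, hc, ← Algebra.commutes, mul_assoc, ← map_mul, mul_inv_cancel, map_one,
      mul_one]

theorem finrank_eq_one_of_scalarSubgroup_eq_top (ρ : Representation K G V) [ρ.IsIrreducible]
    (hρ : scalarSubgroup ρ = ⊤) : Module.finrank K V = 1 := by
  have hinv (p : Submodule K V) (g : G) {v : V} (hv : v ∈ p) : ρ g v ∈ p := by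
    obtain ⟨c, hc⟩ := mem_scalarSubgroup_iff.mp (hρ ▸ Subgroup.mem_top g)
    simpa [hc] using p.smul_mem c hv
  let e : Subrepresentation ρ ≃o Submodule K V :=
    { toFun := Subrepresentation.toSubmodule
      invFun := fun p ↦ ⟨p, fun g _ ↦ hinv p g⟩
      left_inv := fun _ ↦ rfl
      right_inv := fun _ ↦ rfl
      map_rel_iff' := Iff.rfl }
  rw [← isSimpleModule_iff_finrank_eq_one, isSimpleModule_iff]
  exact e.symm.isSimpleOrder

theorem finrank_eq_one_of_normalClosure_eq_top (ρ : Representation K G V) [ρ.IsIrreducible]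
    {n : ℕ} [NeZero n] [HasEnoughRootsOfUnity K n] {t : G} (ht : t ^ n = 1)
    (hnormal : Subgroup.normalClosure {t} = ⊤) (hspec : (spectrum K (ρ t)).Subsingleton) :
    Module.finrank K V = 1 := by
  have hscalar : t ∈ scalarSubgroup ρ :=
    mem_scalarSubgroup_iff.mpr <| exists_eq_algebraMap_of_pow_eq_one (n := n)
      (by rw [← map_pow, ht, map_one]) hspec
  refine finrank_eq_one_of_scalarSubgroup_eq_top ρ (top_unique ?_)
  rw [← hnormal]
  exact Subgroup.normalClosure_le_normal (Set.singleton_subset_iff.mpr hscalar)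

end Scalars

theorem IsIrreducibleRep.isIrreducible {G V : Type} [Group G] [AddCommGroup V] [Module ℂ V]
    {ρ : Representation ℂ G V} (hρ : IsIrreducibleRep ρ) : ρ.IsIrreducible := by
  obtain ⟨hnontrivial, hinv⟩ := hρ
  have : Nontrivial (Subrepresentation ρ) :=
    ⟨⊥, ⊤, fun h ↦ bot_ne_top (congrArg Subrepresentation.toSubmodule h)⟩
  refine ⟨fun p ↦ ?_⟩
  exact (hinv p.toSubmodule fun g ↦ Submodule.map_le_iff_le_comap.mpr
    (p.apply_mem_toSubmodule g)).imp (Subrepresentation.toSubmodule_injective ·)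
      (Subrepresentation.toSubmodule_injective ·)

theorem stmt0_general {K V : Type*} [Field K] [AddCommGroup V] [Module K V] (n : ℕ) [NeZero n]
    [HasEnoughRootsOfUnity K n] (ρ : Representation K (SL2 n) V) [ρ.IsIrreducible]
    (hspec : (spectrum K (ρ (tGen n))).Subsingleton) : Module.finrank K V = 1 :=
  finrank_eq_one_of_normalClosure_eq_top ρ (tGen_pow_self n) (normalClosure_tGen n) hspec

/-- If `ρ` is an irreducible finite-dimensional complex representation of `SL(2, ℤ/nℤ)`
and `ρ(t)` has a unique eigenvalue, then `ρ` is one-dimensional. -/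
theorem stmt0 (n : ℕ) (hn : 1 ≤ n)
    (V : Type) [AddCommGroup V] [Module ℂ V] [FiniteDimensional ℂ V]
    (ρ : Representation ℂ (SL2 n) V)
    (hirr : IsIrreducibleRep ρ)
    (h1 : (spectrum ℂ (ρ (tGen n))).ncard = 1) :
    Module.finrank ℂ V = 1 := by
  have : NeZero n := ⟨by lia⟩
  have := hirr.isIrreducible
  obtain ⟨c, hc⟩ := Set.ncard_eq_one.mp h1
  exact stmt0_general n ρ (hc ▸ Set.subsingleton_singleton)
end

section
/- For any integer n ≥ 1 and any one-dimensional complex representation ρ of SL(2, ℤ/nℤ), the value ρ(t) is a 12th root of unity; moreover, a one-dimensional complex representation of SL(2, ℤ/nℤ) is uniquely determined by its value at t, i.e., if ρ and ρ′ are one-dimensional representations with ρ(t) = ρ′(t), then ρ = ρ′. -/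
/-!
The matrices `t = [[1, 1], [0, 1]]` and `l = [[1, 0], [-1, 1]]` generate `SL(2, R)` whenever `R` is
a quotient of `ℤ`, by the Euclidean algorithm on lifts of the first column. They satisfy the braid
relation `t l t = l t l`, so they are conjugate and a homomorphism to a commutative monoid takes the
same value on both; this value determines the homomorphism. Its cube is the value at `t l t`, and
`(t l t) ^ 4 = 1`, so its twelfth power is `1`.
-/

section Transvections

open Matrix Matrix.SpecialLinearGroup
open scoped MatrixGroups

variable {R : Type*} [CommRing R]

/-- The upper unipotent matrix `[[1, x], [0, 1]]`, as a transvection in `SL(2, R)`; `upper 1` is the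
element `t` of the theorem. -/
def upper (x : R) : SL(2, R) := transvection zero_ne_one x

/-- The lower unipotent matrix `[[1, 0], [x, 1]]`, as a transvection in `SL(2, R)`. Together with
the matrices `upper x` it serves to perform the Euclidean algorithm on a column. -/
def lower (x : R) : SL(2, R) := transvection one_ne_zero x

lemma coe_upper (x : R) : (upper x : Matrix (Fin 2) (Fin 2) R) = !![1, x; 0, 1] := by
  ext i j
  fin_cases i <;> fin_cases j <;> simp [upper, transvection_coe]

lemma coe_lower (x : R) : (lower x : Matrix (Fin 2) (Fin 2) R) = !![1, 0; x, 1] := by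
  ext i j
  fin_cases i <;> fin_cases j <;> simp [lower, transvection_coe]

lemma transvection_zsmul {ι : Type*} [Fintype ι] [DecidableEq ι] {i j : ι} (hij : i ≠ j) (k : ℤ)
    (b : R) : transvection hij (k • b) = transvection hij b ^ k :=
  (AddMonoidHom.mk' (fun b : R ↦ Additive.ofMul (transvection hij b))
    (transvection_add hij)).map_zsmul k b

lemma transvection_mem_of_transvection_one_mem (hR : Function.Surjective (Int.cast : ℤ → R))
    {ι : Type*} [Fintype ι] [DecidableEq ι] {i j : ι} {hij : i ≠ j}
    {H : Subgroup (Matrix.SpecialLinearGroup ι R)} (h : transvection hij (1 : R) ∈ H) (x : R) :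
    transvection hij x ∈ H := by
  obtain ⟨k, rfl⟩ := hR x
  rw [← zsmul_one, transvection_zsmul]
  exact H.zpow_mem h k

lemma coe_upper_mul_lower_mul_upper {x y : R} (h : x * y = -1) :
    ((upper x * lower y * upper x : SL(2, R)) : Matrix (Fin 2) (Fin 2) R) = !![0, x; y, 0] := by
  simp [coe_upper, coe_lower, h, mul_comm y x]

lemma coe_lower_mul_upper_mul_lower {x y : R} (h : x * y = -1) :
    ((lower y * upper x * lower y : SL(2, R)) : Matrix (Fin 2) (Fin 2) R) = !![0, x; y, 0] := by
  simp [coe_upper, coe_lower, h, mul_comm y x]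

lemma upper_lower_braid {x y : R} (h : x * y = -1) :
    upper x * lower y * upper x = lower y * upper x * lower y :=
  Subtype.ext <| (coe_upper_mul_lower_mul_upper h).trans (coe_lower_mul_upper_mul_lower h).symm

lemma upper_mul_lower_mul_upper_pow_four {x y : R} (h : x * y = -1) :
    (upper x * lower y * upper x) ^ 4 = 1 := by
  have hsq : (upper x * lower y * upper x) ^ 2 = -1 := by
    apply Subtype.ext
    rw [Matrix.SpecialLinearGroup.coe_pow, coe_upper_mul_lower_mul_upper h, sq]
    simp [h, mul_comm y x, one_fin_two]
  rw [pow_mul _ 2 2, hsq, neg_one_sq]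

lemma eq_upper_mul_lower_mul_upper_of_apply_one_zero_eq_one {g : SL(2, R)} (hg : g 1 0 = 1) :
    g = upper (g 0 0 - 1) * lower 1 * upper (g 1 1 - 1) := by
  have hdet : g 0 0 * g 1 1 - g 0 1 = 1 := by
    simpa only [det_fin_two, hg, mul_one] using g.det_coe
  have htop : g 0 1 = g 0 0 * (g 1 1 - 1) + (g 0 0 - 1) := by
    linear_combination -hdet
  ext i j
  fin_cases i <;> fin_cases j <;> simp [coe_upper, coe_lower, hg, htop]

section Generation

variable {H : Subgroup SL(2, R)}

lemma mem_of_apply_one_zero_eq_zero (hu : ∀ x, upper x ∈ H) (hl : ∀ x, lower x ∈ H)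
    {g : SL(2, R)} (hg : g 1 0 = 0) : g ∈ H := by
  have hdet : g 1 1 * g 0 0 = 1 := by
    simpa only [det_fin_two, hg, mul_zero, sub_zero, mul_comm (g 0 0)] using g.det_coe
  have hentry : (lower (g 1 1) * g) 1 0 = 1 := by
    simp [coe_lower, Matrix.mul_apply, Fin.sum_univ_two, hg, hdet]
  rw [← H.mul_mem_cancel_left (hl (g 1 1)),
    eq_upper_mul_lower_mul_upper_of_apply_one_zero_eq_one hentry]
  exact H.mul_mem (H.mul_mem (hu _) (hl _)) (hu _)

theorem eq_top_of_upper_mem_of_lower_mem {S : Type*} [EuclideanDomain S] {φ : S →+* R}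
    (hφ : Function.Surjective φ) (hu : ∀ x, upper x ∈ H) (hl : ∀ x, lower x ∈ H) : H = ⊤ := by
  suffices h : ∀ (c : S) (g : SL(2, R)), g 1 0 = φ c → g ∈ H from
    (Subgroup.eq_top_iff' H).2 fun g ↦ (hφ (g 1 0)).elim fun c hc ↦ h c g hc.symm
  intro c
  induction c using (EuclideanDomain.r_wellFounded (R := S)).induction with
  | _ c ih =>
    intro g hgc
    by_cases hc : c = 0
    · exact mem_of_apply_one_zero_eq_zero hu hl (by rw [hgc, hc, map_zero])
    obtain ⟨a, ha⟩ := hφ (g 0 0)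
    -- Left multiplication by `w` moves the reduced top entry to the bottom.
    let w : SL(2, R) := upper (-1) * lower 1 * upper (-1)
    have hw : w ∈ H := H.mul_mem (H.mul_mem (hu _) (hl _)) (hu _)
    have hentry : (w * upper (-φ (a / c)) * g) 1 0 = φ (a % c) := by
      have hcoe : (w : Matrix (Fin 2) (Fin 2) R) = !![0, -1; 1, 0] :=
        coe_upper_mul_lower_mul_upper (neg_one_mul 1)
      calc
        (w * upper (-φ (a / c)) * g) 1 0 = g 0 0 - φ (a / c) * g 1 0 := by
          simp [hcoe, coe_upper, Matrix.mul_apply, Fin.sum_univ_two, sub_eq_add_neg]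
        _ = φ (a % c) := by
          rw [hgc, ← ha, EuclideanDomain.mod_eq_sub_mul_div, map_sub, map_mul, mul_comm]
    have hmem := ih (a % c) (EuclideanDomain.mod_lt a hc) _ hentry
    exact (H.mul_mem_cancel_left (H.mul_mem hw (hu _))).1 hmem

theorem closure_upper_one_lower_neg_one (hR : Function.Surjective (Int.cast : ℤ → R)) :
    Subgroup.closure {(upper 1 : SL(2, R)), lower (-1)} = ⊤ := by
  set H := Subgroup.closure {(upper 1 : SL(2, R)), lower (-1)}
  have hu : upper 1 ∈ H := Subgroup.subset_closure (by simp)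
  have hl : lower 1 ∈ H := by
    have h : lower (-1) ∈ H := Subgroup.subset_closure (by simp)
    rwa [lower, ← transvection_inv, H.inv_mem_iff] at h
  exact eq_top_of_upper_mem_of_lower_mem (φ := Int.castRingHom R) hR
    (transvection_mem_of_transvection_one_mem hR hu)
    (transvection_mem_of_transvection_one_mem hR hl)

end Generation

lemma isConj_of_braid {G : Type*} [Group G] {a b : G} (h : a * b * a = b * a * b) : IsConj a b :=
  isConj_iff.2 ⟨a * b, by rw [h, mul_assoc b, mul_inv_cancel_right]⟩

lemma map_lower_eq_map_upper {A : Type*} [CommMonoid A] (ρ : SL(2, R) →* A) {x y : R}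
    (h : x * y = -1) : ρ (lower y) = ρ (upper x) :=
  (isConj_iff_eq.1 (ρ.map_isConj (isConj_of_braid (upper_lower_braid h)))).symm

lemma map_upper_pow_twelve {A : Type*} [CommMonoid A] (ρ : SL(2, R) →* A) {x y : R}
    (h : x * y = -1) : ρ (upper x) ^ 12 = 1 :=
  calc
    ρ (upper x) ^ 12 = (ρ (upper x) * ρ (lower y) * ρ (upper x)) ^ 4 := by
      rw [map_lower_eq_map_upper ρ h, ← pow_three', ← pow_mul]
    _ = ρ ((upper x * lower y * upper x) ^ 4) := by simp only [map_pow, map_mul]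
    _ = 1 := by rw [upper_mul_lower_mul_upper_pow_four h, map_one]

theorem stmt4_general (hR : Function.Surjective (Int.cast : ℤ → R)) {A : Type*} [CommMonoid A]
    (ρ : SL(2, R) →* A) :
    ρ (upper 1) ^ 12 = 1 ∧ ∀ ρ' : SL(2, R) →* A, ρ (upper 1) = ρ' (upper 1) → ρ = ρ' := by
  have hone : (1 : R) * -1 = -1 := one_mul _
  refine ⟨map_upper_pow_twelve ρ hone, fun ρ' h ↦ ?_⟩
  refine MonoidHom.eq_of_eqOn_dense (closure_upper_one_lower_neg_one hR) ?_
  rintro _ (rfl | rfl)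
  · exact h
  · rw [map_lower_eq_map_upper ρ hone, map_lower_eq_map_upper ρ' hone, h]

lemma tGen_eq_upper_one (n : ℕ) : tGen n = upper 1 :=
  Subtype.ext (coe_upper 1).symm

end Transvections

/-- Any one-dimensional complex representation `ρ` of `SL(2, ℤ/nℤ)` (i.e. a homomorphism
to `ℂˣ`) sends `t` to a 12th root of unity, and is uniquely determined by its value at `t`. -/
theorem stmt4 (n : ℕ) (hn : 1 ≤ n) (ρ : SL2 n →* ℂˣ) :
    ((ρ (tGen n) : ℂ) ^ 12 = 1) ∧
    (∀ ρ' : SL2 n →* ℂˣ, ρ (tGen n) = ρ' (tGen n) → ρ = ρ') := by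
  rw [tGen_eq_upper_one, ← Units.val_pow_eq_pow_val, Units.val_eq_one]
  exact stmt4_general ZMod.intCast_surjective ρ
end
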